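/- arXiv:1609.00283 — 2 statements merged into one kernel-verified Lean document; each statement's English description precedes it below -/
import Mathlib

section
/- Suppose the digraph is acyclic and the first n−1 edges form a rooted in-branching with root the vertex indexed n−1. If e_i is an edge with index i ≥ n−1 (a chord) and e_j is an edge with index j ≤ n−2 (a branch edge) such that tail e_i = tail e_j (they are sibling edges), then the entry R j i of the matrix R equals +1. -/
open Matrix

/-!
In a rooted in-branching `τ` every vertex has a unique directed path to the root. Let `P` be the
matrix whose `(e, v)` entry is `1` if the path from `v` uses the edge `e`, and `0` otherwise. Then
`P * Eτ = 1`, because the path from the tail of an edge is that edge followed by the path from its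
head; and `Eτ * P` differs from the identity by a matrix with constant rows, because the edges of a
path telescope. The columns of `Ec` have sum zero, so `Ec = Eτ * (P * Ec)`, and the least-squares
solution `Tτ` is therefore `P * Ec`: its `(e, c)` entry is `P e (tail c) - P e (head c)`. If `c` is
a sibling of `e` this is `1 - P e (head c)`, and `P e (head c) ≠ 0` would close a directed cycle
through `c`.
-/

section LeastSquares

variable {m n : Type*} [Fintype m] [Fintype n] [DecidableEq n]

lemma isUnit_transpose_mul_self_of_mul_eq_one {K : Type*} [Field K] [LinearOrder K]
    [IsStrictOrderedRing K] {A : Matrix m n K} {P : Matrix n m K} (hPA : P * A = 1) :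
    IsUnit (Aᵀ * A) := by
  rw [← mulVec_injective_iff_isUnit, ← coe_mulVecLin, ← LinearMap.ker_eq_bot,
    ker_mulVecLin_transpose_mul_self, ker_mulVecLin_eq_bot_iff]
  intro x hx
  rw [← one_mulVec x, ← hPA, ← mulVec_mulVec, hx, mulVec_zero]

lemma inv_transpose_mul_self_mul_transpose_mul_mul {k R : Type*} [CommRing R] {A : Matrix m n R}
    (hA : IsUnit (Aᵀ * A)) (X : Matrix n k R) : (Aᵀ * A)⁻¹ * Aᵀ * (A * X) = X := by
  rw [Matrix.mul_assoc, ← Matrix.mul_assoc Aᵀ,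
    nonsing_inv_mul_cancel_left _ _ ((isUnit_iff_isUnit_det _).1 hA)]

end LeastSquares

lemma not_transGen_self_of_reflTransGen_terminal {α : Type*} {r : α → α → Prop} {a t : α}
    (hr : Relator.RightUnique r) (ht : ∀ b, ¬ r t b) (hat : Relation.ReflTransGen r a t) :
    ¬ Relation.TransGen r a a := by
  induction hat using Relation.ReflTransGen.head_induction_on with
  | refl =>
    intro hcycle
    obtain ⟨b, htb, -⟩ := Relation.TransGen.head'_iff.1 hcycle
    exact ht b htb
  | head hac _ not_cycle =>
    intro hcycle
    obtain ⟨c', hac', hc'a⟩ := Relation.TransGen.head'_iff.1 hcycle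
    obtain rfl := hr hac hac'
    exact not_cycle (.tail' hc'a hac)

section Incidence

variable {V ε : Type*} [DecidableEq V]

/-- The vertex-edge incidence matrix of the digraph with edges `e : tail e ⟶ head e`. Writing it as
a difference of two indicator matrices gives self-loops the column zero. -/
def incidenceMatrix (R : Type*) [Ring R] (tail head : ε → V) : Matrix V ε R :=
  (1 : Matrix V V R).submatrix id tail - (1 : Matrix V V R).submatrix id head

variable {R : Type*} [Ring R]

lemma incidenceMatrix_apply_of_ne {tail head : ε → V} {e : ε} (he : tail e ≠ head e) (v : V) :
    incidenceMatrix R tail head v e = if v = tail e then 1 else if v = head e then -1 else 0 := by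
  simp only [incidenceMatrix, Matrix.sub_apply, submatrix_apply, id, one_apply]
  split_ifs with htail hhead
  · exact absurd (htail.symm.trans hhead) he
  all_goals simp

lemma mul_incidenceMatrix_apply {k : Type*} [Fintype V] (M : Matrix k V R)
    (tail head : ε → V) (i : k) (e : ε) :
    (M * incidenceMatrix R tail head) i e = M i (tail e) - M i (head e) := by
  simp [incidenceMatrix, mul_apply, one_apply, mul_sub]

end Incidence

/-- The adjacency relation of the digraph with edges `e : tail e ⟶ head e`. -/
def EdgeStep {V ε : Type*} (tail head : ε → V) (u v : V) : Prop :=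
  ∃ e, tail e = u ∧ head e = v

/-- The digraph with edges `e : tail e ⟶ head e` is a rooted in-branching: the root has no outgoing
edge, every other vertex has exactly one, and all vertices reach the root. The existence of an
outgoing edge at every other vertex is encoded in `reaches_root`. -/
structure IsInBranching {V ε : Type*} (tail head : ε → V) (root : V) : Prop where
  tail_injective : Function.Injective tail
  tail_ne_root : ∀ e, tail e ≠ root
  reaches_root : ∀ v, Relation.ReflTransGen (EdgeStep tail head) v root

open Classical in
/-- The edge-vertex path matrix of a digraph: the entry at `(e, v)` says whether `v` reaches the
tail of `e`. In an in-branching this means that the path from `v` to the root uses the edge `e`. -/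
noncomputable def pathMatrix {V ε : Type*} (R : Type*) [Zero R] [One R] (tail head : ε → V) :
    Matrix ε V R :=
  of fun e v => if Relation.ReflTransGen (EdgeStep tail head) v (tail e) then 1 else 0

section PathMatrix

variable {V ε R : Type*} [Zero R] [One R] {tail head : ε → V} {e : ε} {v : V}

lemma pathMatrix_apply_of_reaches
    (hv : Relation.ReflTransGen (EdgeStep tail head) v (tail e)) : pathMatrix R tail head e v = 1 :=
  if_pos hv

lemma pathMatrix_apply_of_not_reaches
    (hv : ¬ Relation.ReflTransGen (EdgeStep tail head) v (tail e)) :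
    pathMatrix R tail head e v = 0 :=
  if_neg hv

lemma pathMatrix_apply_congr {u : V}
    (h : Relation.ReflTransGen (EdgeStep tail head) u (tail e) ↔
      Relation.ReflTransGen (EdgeStep tail head) v (tail e)) :
    pathMatrix R tail head e u = pathMatrix R tail head e v := by
  classical exact if_congr h rfl rfl

end PathMatrix

namespace IsInBranching

variable {V ε R : Type*} {tail head : ε → V} {root : V}

lemma rightUnique_edgeStep (hτ : IsInBranching tail head root) :
    Relator.RightUnique (EdgeStep tail head) := by
  rintro _ _ _ ⟨e, rfl, rfl⟩ ⟨e', he', rfl⟩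
  rw [hτ.tail_injective he']

lemma not_edgeStep_root (hτ : IsInBranching tail head root) (v : V) :
    ¬ EdgeStep tail head root v := by
  rintro ⟨e, he, -⟩
  exact hτ.tail_ne_root e he

lemma not_reaches_tail_of_head (hτ : IsInBranching tail head root) (e : ε) :
    ¬ Relation.ReflTransGen (EdgeStep tail head) (head e) (tail e) := fun h =>
  not_transGen_self_of_reflTransGen_terminal hτ.rightUnique_edgeStep hτ.not_edgeStep_root
    (hτ.reaches_root (tail e)) (.head' ⟨e, rfl, rfl⟩ h)

lemma tail_reaches_iff_head_reaches (hτ : IsInBranching tail head root) {e : ε} {v : V}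
    (hv : tail e ≠ v) :
    Relation.ReflTransGen (EdgeStep tail head) (tail e) v ↔
      Relation.ReflTransGen (EdgeStep tail head) (head e) v := by
  refine ⟨fun h => ?_, .head ⟨e, rfl, rfl⟩⟩
  obtain rfl | ⟨u, hu, huv⟩ := h.cases_head
  · exact absurd rfl hv
  · rwa [hτ.rightUnique_edgeStep ⟨e, rfl, rfl⟩ hu]

lemma pathMatrix_apply_root [Zero R] [One R] (hτ : IsInBranching tail head root) (e : ε) :
    pathMatrix R tail head e root = 0 := by
  refine pathMatrix_apply_of_not_reaches fun h => ?_
  obtain hroot | ⟨v, hv, -⟩ := h.cases_head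
  · exact hτ.tail_ne_root e hroot.symm
  · exact hτ.not_edgeStep_root v hv

variable [DecidableEq V] [Ring R]

theorem pathMatrix_mul_incidenceMatrix [Fintype V] [DecidableEq ε]
    (hτ : IsInBranching tail head root) :
    pathMatrix R tail head * incidenceMatrix R tail head = 1 := by
  ext e e'
  rw [mul_incidenceMatrix_apply]
  obtain rfl | hne := eq_or_ne e e'
  · rw [pathMatrix_apply_of_reaches .refl,
      pathMatrix_apply_of_not_reaches (hτ.not_reaches_tail_of_head e), sub_zero, one_apply_eq]
  · have htail : tail e' ≠ tail e := hτ.tail_injective.ne hne.symm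
    rw [pathMatrix_apply_congr (hτ.tail_reaches_iff_head_reaches htail), sub_self, one_apply_ne hne]

theorem incidenceMatrix_mul_pathMatrix_apply [Finite V] [Fintype ε]
    (hτ : IsInBranching tail head root) (u v : V) :
    (incidenceMatrix R tail head * pathMatrix R tail head) u v =
      (1 : Matrix V V R) u v - (1 : Matrix V V R) u root := by
  classical
  have := Fintype.ofFinite V
  set A := incidenceMatrix R tail head with hA
  set P := pathMatrix R tail head
  have column_sub (e : ε) : (A * P) u (tail e) - (A * P) u (head e) =
      (1 : Matrix V V R) u (tail e) - (1 : Matrix V V R) u (head e) := by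
    rw [← mul_incidenceMatrix_apply, ← hA, Matrix.mul_assoc, hτ.pathMatrix_mul_incidenceMatrix,
      Matrix.mul_one]
    rfl
  induction hτ.reaches_root v using Relation.ReflTransGen.head_induction_on with
  | refl => simp [mul_apply, P, hτ.pathMatrix_apply_root]
  | head hstep _ ih =>
    obtain ⟨e, rfl, rfl⟩ := hstep
    rw [← sub_add_cancel ((A * P) u (tail e)) ((A * P) u (head e)), column_sub, ih,
      sub_add_sub_cancel]

variable {γ : Type*} [Fintype V] [Fintype ε]

theorem incidenceMatrix_mul_pathMatrix_mul_incidenceMatrix (hτ : IsInBranching tail head root)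
    (ctail chead : γ → V) :
    incidenceMatrix R tail head * (pathMatrix R tail head * incidenceMatrix R ctail chead) =
      incidenceMatrix R ctail chead := by
  ext u c
  rw [← Matrix.mul_assoc, mul_incidenceMatrix_apply, hτ.incidenceMatrix_mul_pathMatrix_apply,
    hτ.incidenceMatrix_mul_pathMatrix_apply, sub_sub_sub_cancel_right]
  rfl

theorem inv_transpose_mul_self_mul_transpose_mul_incidenceMatrix {K : Type*} [Field K]
    [LinearOrder K] [IsStrictOrderedRing K] [DecidableEq ε]
    (hτ : IsInBranching tail head root) (ctail chead : γ → V) :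
    ((incidenceMatrix K tail head)ᵀ * incidenceMatrix K tail head)⁻¹ *
        (incidenceMatrix K tail head)ᵀ * incidenceMatrix K ctail chead =
      pathMatrix K tail head * incidenceMatrix K ctail chead := by
  conv_lhs => rw [← hτ.incidenceMatrix_mul_pathMatrix_mul_incidenceMatrix ctail chead]
  exact inv_transpose_mul_self_mul_transpose_mul_mul
    (isUnit_transpose_mul_self_of_mul_eq_one hτ.pathMatrix_mul_incidenceMatrix) _

end IsInBranching

theorem R_entry_of_sibling_chord_eq_one_general {V ε γ K : Type*} [Fintype V] [DecidableEq V]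
    [Fintype ε] [DecidableEq ε] [Field K] [LinearOrder K] [IsStrictOrderedRing K]
    {tail head : ε → V} {root : V} (hτ : IsInBranching tail head root) {ctail chead : γ → V}
    {e : ε} {c : γ} (hsib : ctail c = tail e)
    (hreach : ¬ Relation.ReflTransGen (EdgeStep tail head) (chead c) (tail e)) :
    (fromCols 1 (((incidenceMatrix K tail head)ᵀ * incidenceMatrix K tail head)⁻¹ *
      (incidenceMatrix K tail head)ᵀ * incidenceMatrix K ctail chead) : Matrix ε (ε ⊕ γ) K)
      e (.inr c) = 1 := by
  rw [fromCols_apply_inr, hτ.inv_transpose_mul_self_mul_transpose_mul_incidenceMatrix,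
    mul_incidenceMatrix_apply, hsib, pathMatrix_apply_of_reaches .refl,
    pathMatrix_apply_of_not_reaches hreach, sub_zero]

/-- For an acyclic digraph whose first `n-1` edges form a rooted
in-branching with root the vertex `n-1`, if a chord `e_i` (with `i ≥ n-1`) and a branch
edge `e_j` (with `j ≤ n-2`) are sibling edges (same tail), then `R j i = 1`. -/
theorem R_entry_of_sibling_chord_eq_one
    (n m : ℕ) (hn : 2 ≤ n) (hm : 1 ≤ m) (hmn : n - 1 ≤ m)
    (tail head : Fin m → Fin n) (hth : ∀ e, tail e ≠ head e)
    (w : Fin m → ℝ)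
    (E : Matrix (Fin n) (Fin m) ℝ)
    (hE : ∀ v e, E v e = if v = tail e then 1 else if v = head e then -1 else 0)
    (hacyclic : ∀ v : Fin n,
      ¬ Relation.TransGen (fun a b => ∃ e, tail e = a ∧ head e = b) v v)
    (root : Fin n) (hroot : root = ⟨n - 1, by omega⟩)
    -- the first n-1 edges form a rooted in-branching with root `root`:
    (hinj : Function.Injective (fun i : Fin (n - 1) => tail ⟨i.val, lt_of_lt_of_le i.2 hmn⟩))
    (hnotroot : ∀ i : Fin (n - 1), tail ⟨i.val, lt_of_lt_of_le i.2 hmn⟩ ≠ root)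
    (hsurj : ∀ v : Fin n, v ≠ root → ∃ i : Fin (n - 1), tail ⟨i.val, lt_of_lt_of_le i.2 hmn⟩ = v)
    (hreach : ∀ v : Fin n, Relation.ReflTransGen
      (fun a b => ∃ e : Fin m, e.val < n - 1 ∧ tail e = a ∧ head e = b) v root)
    (Eτ : Matrix (Fin n) (Fin (n - 1)) ℝ)
    (hEτ : Eτ = E.submatrix id (fun i : Fin (n - 1) => ⟨i.val, lt_of_lt_of_le i.2 hmn⟩))
    (Ec : Matrix (Fin n) (Fin (m - (n - 1))) ℝ)
    (hEc : Ec = E.submatrix id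
      (fun j : Fin (m - (n - 1)) => ⟨n - 1 + j.val, by have := j.2; omega⟩))
    (Tτ : Matrix (Fin (n - 1)) (Fin (m - (n - 1))) ℝ)
    (hTτ : Tτ = (Eτᵀ * Eτ)⁻¹ * Eτᵀ * Ec)
    (R : Matrix (Fin (n - 1)) (Fin m) ℝ)
    (hR : ∀ (i : Fin (n - 1)) (j : Fin m), R i j =
      if h : j.val < n - 1 then (if i.val = j.val then 1 else 0)
      else Tτ i ⟨j.val - (n - 1), by have := j.2; omega⟩)
    (i j : Fin m) (hi : n - 1 ≤ i.val) (hj : j.val < n - 1)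
    (hsib : tail i = tail j) :
    R ⟨j.val, hj⟩ i = 1 := by
  have hτ : IsInBranching (fun k : Fin (n - 1) => tail (k.castLE hmn))
      (fun k => head (k.castLE hmn)) root :=
    ⟨hinj, hnotroot, fun v => Relation.ReflTransGen.mono
      (fun _ _ ⟨e, he, hstep⟩ => ⟨⟨e, he⟩, hstep⟩) _ _ (hreach v)⟩
  have hchord : ¬ Relation.ReflTransGen (EdgeStep (fun k : Fin (n - 1) => tail (k.castLE hmn))
      (fun k => head (k.castLE hmn))) (head i) (tail j) := fun h =>
    hacyclic (tail j) <| .head' ⟨i, hsib, rfl⟩ <|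
      Relation.ReflTransGen.mono (fun _ _ ⟨k, hstep⟩ => ⟨k.castLE hmn, hstep⟩) _ _ h
  obtain rfl : E = incidenceMatrix ℝ tail head := by
    ext v e
    rw [hE, incidenceMatrix_apply_of_ne (hth e)]
  rw [hR, dif_neg hi.not_gt, hTτ, hEτ, hEc]
  exact R_entry_of_sibling_chord_eq_one_general (e := ⟨j, hj⟩) hτ
    (by simpa only [Nat.add_sub_cancel' hi, Fin.castLE_mk, Fin.eta] using hsib)
    (by simpa only [Nat.add_sub_cancel' hi, Fin.castLE_mk, Fin.eta] using hchord)
end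

section
/- Suppose the digraph is acyclic, all edge weights are positive, and the first n−1 edges form a rooted in-branching with root the vertex indexed n−1. Then the (n−1)×(n−1) matrix R̃ * W * Rᵀ is invertible, and for every edge index k the (k,k) entry of the m×m matrix Rᵀ * (R̃ * W * Rᵀ)⁻¹ * R̃ equals the reciprocal of Σ_{e : tail e = tail k} w e (the sum of the weights of all edges sharing the tail of edge k). -/
open Matrix

/-!
Order the vertices so that heads precede tails. Since `Eτᵀ * Eτ` and `Aτᵀ * Aτ` are invertible,
`R = (Eτᵀ * Eτ)⁻¹ * Eτᵀ * E` and `R̃ = (Aτᵀ * Aτ)⁻¹ * Aτᵀ * A`. Deleting the root row turns `E`,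
`Eτ`, `A` into `B`, `Q`, `P`, and these formulas become `R = Q⁻¹ * B` (the columns of `E` sum to
zero, so the root row carries no information) and `R̃ = P`. The factor `Q` cancels:
`Rᵀ * (R̃ * W * Rᵀ)⁻¹ * R̃ = Bᵀ * L⁻¹ * P`, where `L = P * W * Bᵀ` is the Laplacian without its root
row and column. It is triangular with the total outgoing weights on its diagonal, so `L⁻¹` is
triangular with their reciprocals on its diagonal. Column `k` of `P` selects column `tail k` of
`L⁻¹`, which vanishes below `tail k`, whereas column `k` of `B` vanishes above `tail k`: only the
diagonal entry of `L⁻¹` at `tail k` survives.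
-/

theorem exists_linearOrder_injective_lt_of_acyclic.{u} {V : Type u} {r : V → V → Prop}
    (hr : ∀ v, ¬ Relation.TransGen r v v) :
    ∃ (α : Type u) (_ : LinearOrder α) (b : V → α),
      Function.Injective b ∧ ∀ u v, r u v → b v < b u := by
  let _ : PartialOrder V :=
    { le := fun u v => Relation.ReflTransGen r v u
      le_refl := fun _ => .refl
      le_trans := fun _ _ _ huv hvw => hvw.trans huv
      le_antisymm := fun u v huv hvu => by
        by_contra hne
        rcases Relation.reflTransGen_iff_eq_or_transGen.1 huv with h | h
        · exact hne h
        · exact hr v (h.trans_left hvu) }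
  have hinj : Function.Injective (toLinearExtension (α := V)) := fun _ _ h => h
  refine ⟨LinearExtension V, inferInstance, toLinearExtension, hinj, fun u v huv => ?_⟩
  refine (toLinearExtension.monotone (Relation.ReflTransGen.single huv)).lt_of_ne fun h => ?_
  exact hr u (.single (hinj h ▸ huv))

theorem tail_ne_of_forall_exists_tail_eq {V ε α : Type*} [Finite V] [LinearOrder α]
    {tail head : ε → V} {b : V → α} (hlt : ∀ e, b (head e) < b (tail e)) {root : V}
    (hroot : ∀ v ≠ root, ∃ e, tail e = v) (e : ε) : tail e ≠ root := by
  have : Nonempty V := ⟨root⟩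
  obtain ⟨v, hv⟩ := Finite.exists_min b
  have hsink : ∀ e, tail e ≠ v := fun e he => (hlt e).not_ge (he ▸ hv (head e))
  obtain rfl : v = root := by
    by_contra hne
    obtain ⟨e, he⟩ := hroot v hne
    exact hsink e he
  exact hsink e

section Triangular

variable {ι α : Type*} [Fintype ι] [LinearOrder α] {b : ι → α}

theorem dotProduct_eq_mul_of_eq_zero_of_lt {R : Type*} [NonUnitalNonAssocSemiring R]
    (hb : Function.Injective b) {x y : ι → R} {i : ι}
    (hx : ∀ j, b j < b i → x j = 0) (hy : ∀ j, b i < b j → y j = 0) :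
    x ⬝ᵥ y = x i * y i := by
  refine Fintype.sum_eq_single i fun j hj => ?_
  rcases lt_or_gt_of_ne (hb.ne hj) with hlt | hgt
  · rw [hx j hlt, zero_mul]
  · rw [hy j hgt, mul_zero]

theorem det_of_blockTriangular_of_injective {R : Type*} [CommRing R] [DecidableEq ι]
    {M : Matrix ι ι R} (hM : M.BlockTriangular b) (hb : Function.Injective b) :
    M.det = ∏ i, M i i := by
  let _ : LinearOrder ι := LinearOrder.lift' b hb
  convert det_of_isUpperTriangular (M := M) fun i j hij => hM hij

theorem inv_apply_self_of_blockTriangular {K : Type*} [Field K] [DecidableEq ι]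
    {M : Matrix ι ι K} (hM : M.BlockTriangular b) (hb : Function.Injective b) (hu : IsUnit M)
    (i : ι) : M⁻¹ i i = (M i i)⁻¹ := by
  have := hu.invertible
  have hM' : M⁻¹.BlockTriangular b := blockTriangular_inv_of_blockTriangular hM
  refine eq_inv_of_mul_eq_one_right ?_
  calc M i i * M⁻¹ i i = (M * M⁻¹) i i :=
        (dotProduct_eq_mul_of_eq_zero_of_lt hb (fun _ h => hM h) (fun _ h => hM' h)).symm
    _ = 1 := by rw [mul_inv_of_invertible, one_apply_eq]

end Triangular

section ColumnCoords

variable {V ε ι R K : Type*} [Fintype V] [Fintype ι] [DecidableEq ι]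

/-- The matrix `(Mτᵀ * Mτ)⁻¹ * Mτᵀ * M`, where `Mτ` consists of the columns of `M` selected by `τ`:
the least-squares coordinates of the columns of `M` with respect to those of `Mτ`. When the selected
columns come first and `Mτᵀ * Mτ` is invertible, this is the block matrix
`[I  (Mτᵀ * Mτ)⁻¹ * Mτᵀ * Mc]`, where `Mc` consists of the other columns of `M`. -/
noncomputable def columnCoords [CommRing R] (M : Matrix V ε R) (τ : ι → ε) : Matrix ι ε R :=
  ((M.submatrix id τ)ᵀ * M.submatrix id τ)⁻¹ * (M.submatrix id τ)ᵀ * M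

theorem columnCoords_eq_of_eq_mul [CommRing R] {M : Matrix V ε R} {τ : ι → ε} {X : Matrix ι ε R}
    (hu : IsUnit ((M.submatrix id τ)ᵀ * M.submatrix id τ)) (hX : M = M.submatrix id τ * X) :
    columnCoords M τ = X := by
  have hdet := (isUnit_iff_isUnit_det _).1 hu
  calc columnCoords M τ
      = ((M.submatrix id τ)ᵀ * M.submatrix id τ)⁻¹ * (M.submatrix id τ)ᵀ *
          (M.submatrix id τ * X) := by rw [← hX, columnCoords]
    _ = ((M.submatrix id τ)ᵀ * M.submatrix id τ)⁻¹ *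
          ((M.submatrix id τ)ᵀ * M.submatrix id τ * X) := by simp only [Matrix.mul_assoc]
    _ = X := nonsing_inv_mul_cancel_left _ X hdet

theorem columnCoords_submatrix_id_self [CommRing R] {M : Matrix V ε R} {τ : ι → ε}
    (hu : IsUnit ((M.submatrix id τ)ᵀ * M.submatrix id τ)) :
    (columnCoords M τ).submatrix id τ = 1 :=
  calc (columnCoords M τ).submatrix id τ
      = ((M.submatrix id τ)ᵀ * M.submatrix id τ)⁻¹ * (M.submatrix id τ)ᵀ * M.submatrix id τ := rfl
    _ = 1 := by rw [Matrix.mul_assoc, nonsing_inv_mul _ ((isUnit_iff_isUnit_det _).1 hu)]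

theorem eq_columnCoords_of_leading_columns [CommRing R] {p m : ℕ} (hpm : p ≤ m)
    {M : Matrix V (Fin m) R} {Mτ : Matrix V (Fin p) R} (hMτ : Mτ = M.submatrix id (Fin.castLE hpm))
    {Mc : Matrix V (Fin (m - p)) R}
    (hMc : Mc = M.submatrix id fun j : Fin (m - p) => ⟨p + j.val, by lia⟩)
    (hu : IsUnit (Mτᵀ * Mτ))
    {T : Matrix (Fin p) (Fin (m - p)) R} (hT : T = (Mτᵀ * Mτ)⁻¹ * Mτᵀ * Mc)
    {X : Matrix (Fin p) (Fin m) R}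
    (hX : ∀ i j, X i j = if h : j.val < p then (if i.val = j.val then 1 else 0)
      else T i ⟨j.val - p, by lia⟩) :
    X = columnCoords M (Fin.castLE hpm) := by
  subst hMτ hMc hT
  have hleading : ∀ i j, columnCoords M (Fin.castLE hpm) i (Fin.castLE hpm j) =
      if i = j then 1 else 0 :=
    fun i j => congrFun (congrFun (columnCoords_submatrix_id_self hu) i) j
  ext i j
  rw [hX]
  split_ifs with hj hij
  · exact (hleading i ⟨j, hj⟩).trans (if_pos (Fin.ext hij)) |>.symm
  · exact (hleading i ⟨j, hj⟩).trans (if_neg fun h => hij (congrArg Fin.val h)) |>.symm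
  · have hcol : (⟨p + (j.val - p), by lia⟩ : Fin m) = j := Fin.ext (by simp only; lia)
    simp only [columnCoords, mul_apply, submatrix_apply, id_eq, hcol]

theorem isUnit_transpose_mul_self_of_isUnit_submatrix [Field K] [LinearOrder K]
    [IsStrictOrderedRing K] {M : Matrix V ι K} {t : ι → V} (h : IsUnit (M.submatrix t id)) :
    IsUnit (Mᵀ * M) := by
  rw [← mulVec_injective_iff_isUnit, ← coe_mulVecLin, ← LinearMap.ker_eq_bot,
    ker_mulVecLin_transpose_mul_self, LinearMap.ker_eq_bot]
  intro x y hxy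
  exact mulVec_injective_iff_isUnit.2 h (funext fun i => congrFun hxy (t i))

theorem eq_of_one_vecMul_eq_of_forall_ne [Ring R] {M N : Matrix V ε R} {root : V}
    (hsums : 1 ᵥ* M = 1 ᵥ* N) (h : ∀ v ≠ root, ∀ e, M v e = N v e) : M = N := by
  classical
  ext v e
  by_cases hv : v = root
  · have hsum : ∑ u, M u e = ∑ u, N u e := by
      simpa [vecMul, dotProduct] using congrFun hsums e
    rw [← Finset.add_sum_erase _ _ (Finset.mem_univ root),
      ← Finset.add_sum_erase Finset.univ _ (Finset.mem_univ root),
      Finset.sum_congr rfl fun u hu => h u (Finset.ne_of_mem_erase hu) e] at hsum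
    exact hv ▸ add_right_cancel hsum
  · exact h v hv e

theorem columnCoords_eq_inv_submatrix_mul [Field K] [LinearOrder K] [IsStrictOrderedRing K]
    {M : Matrix V ε K} {τ : ι → ε} {t : ι → V} {root : V} (hM : 1 ᵥ* M = 0)
    (ht : ∀ v ≠ root, ∃ i, t i = v) (hu : IsUnit (M.submatrix t τ)) :
    columnCoords M τ = (M.submatrix t τ)⁻¹ * M.submatrix t id := by
  refine columnCoords_eq_of_eq_mul (isUnit_transpose_mul_self_of_isUnit_submatrix hu) ?_
  have hτ : 1 ᵥ* M.submatrix id τ = 0 := funext fun i => congrFun hM (τ i)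
  refine eq_of_one_vecMul_eq_of_forall_ne (root := root) ?_ fun v hv e => ?_
  · rw [hM, ← vecMul_vecMul, hτ, zero_vecMul]
  · obtain ⟨i, rfl⟩ := ht v hv
    have hdet := (isUnit_iff_isUnit_det _).1 hu
    have hcancel := mul_nonsing_inv_cancel_left _ (M.submatrix t id) hdet
    exact (congrFun (congrFun hcancel i) e).symm

end ColumnCoords

section Digraph

variable {V ε ι R α : Type*} [DecidableEq V] {tail head : ε → V}

/-- The incidence matrix of the digraph with edge set `ε`. A loop gets the column of its tail
in `outIncMatrix`. -/
def digraphIncMatrix (R : Type*) [Ring R] (tail head : ε → V) : Matrix V ε R :=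
  of fun v e => if v = tail e then 1 else if v = head e then -1 else 0

/-- The out-incidence matrix of a digraph with edge set `ε`, recording only the tails. -/
def outIncMatrix (R : Type*) [Semiring R] (tail : ε → V) : Matrix V ε R :=
  of fun v e => if v = tail e then 1 else 0

/-- The total weight of the edges leaving the vertex `v`. -/
def outWeight [AddCommMonoid R] [Fintype ε] (tail : ε → V) (w : ε → R) (v : V) : R :=
  ∑ e with tail e = v, w e

/-- The out-degree Laplacian of a weighted digraph: outgoing weights on the diagonal, and minus the
weight from `u` to `v` at `(u, v)`. -/
def outLaplacian [Ring R] [Fintype ε] [DecidableEq ε] (tail head : ε → V) (w : ε → R) :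
    Matrix V V R :=
  outIncMatrix R tail * diagonal w * (digraphIncMatrix R tail head)ᵀ

theorem digraphIncMatrix_apply_tail [Ring R] (e : ε) :
    digraphIncMatrix R tail head (tail e) e = 1 :=
  if_pos rfl

theorem digraphIncMatrix_apply_eq_zero_of_lt [Ring R] [Preorder α] {b : V → α} {e : ε} {v : V}
    (he : b (head e) < b (tail e)) (hv : b (tail e) < b v) :
    digraphIncMatrix R tail head v e = 0 := by
  have hvt : v ≠ tail e := by rintro rfl; exact hv.false
  have hvh : v ≠ head e := by rintro rfl; exact (he.trans hv).false
  simp only [digraphIncMatrix, of_apply, if_neg hvt, if_neg hvh]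

theorem one_vecMul_digraphIncMatrix [Ring R] [Fintype V] (hth : ∀ e, tail e ≠ head e) :
    1 ᵥ* digraphIncMatrix R tail head = 0 := by
  ext e
  have hentry : ∀ v, digraphIncMatrix R tail head v e =
      (if v = tail e then 1 else 0) - if v = head e then 1 else 0 := by
    intro v
    rcases eq_or_ne v (tail e) with rfl | hv
    · simp [digraphIncMatrix, hth e]
    · simp only [digraphIncMatrix, of_apply, if_neg hv]
      split_ifs <;> simp
  simp [vecMul, dotProduct, hentry]

theorem isUnit_submatrix_digraphIncMatrix [CommRing R] [LinearOrder α] [Fintype ι] [DecidableEq ι]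
    {τ : ι → ε} {b : V → α} (hb : Function.Injective b) (hlt : ∀ e, b (head e) < b (tail e))
    (hinj : Function.Injective (tail ∘ τ)) :
    IsUnit ((digraphIncMatrix R tail head).submatrix (tail ∘ τ) τ) := by
  have htri : ((digraphIncMatrix R tail head).submatrix (tail ∘ τ) τ).BlockTriangular
      (b ∘ tail ∘ τ) := fun _ j hij => digraphIncMatrix_apply_eq_zero_of_lt (hlt (τ j)) hij
  rw [isUnit_iff_isUnit_det, det_of_blockTriangular_of_injective htri (hb.comp hinj)]
  simp [digraphIncMatrix_apply_tail]

theorem transpose_outIncMatrix_mul [Semiring R] [Fintype V] {κ : Type*} (M : Matrix V κ R) :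
    (outIncMatrix R tail)ᵀ * M = M.submatrix tail id := by
  ext e k
  simp [outIncMatrix, mul_apply]

theorem mul_submatrix_outIncMatrix_apply [Semiring R] [Fintype ι] {κ : Type*} {t : ι → V}
    (ht : Function.Injective t) (M : Matrix κ ι R) (j : κ) {i : ι} {e : ε} (hi : t i = tail e) :
    (M * (outIncMatrix R tail).submatrix t id) j e = M j i := by
  classical
  simp [outIncMatrix, mul_apply, ← hi, ht.eq_iff]

theorem transpose_mul_self_outIncMatrix [Semiring R] [Fintype V] [DecidableEq ε]
    (hinj : Function.Injective tail) : (outIncMatrix R tail)ᵀ * outIncMatrix R tail = 1 := by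
  ext e e'
  rw [transpose_outIncMatrix_mul]
  simp [outIncMatrix, one_apply, hinj.eq_iff]

theorem columnCoords_outIncMatrix [CommRing R] [Fintype V] [Fintype ι] [DecidableEq ι] {τ : ι → ε}
    (hinj : Function.Injective (tail ∘ τ)) :
    columnCoords (outIncMatrix R tail) τ = (outIncMatrix R tail).submatrix (tail ∘ τ) id := by
  have hsub : (outIncMatrix R tail).submatrix id τ = outIncMatrix R (tail ∘ τ) := rfl
  rw [columnCoords, hsub, transpose_mul_self_outIncMatrix hinj, inv_one, Matrix.one_mul,
    transpose_outIncMatrix_mul]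

section Laplacian

variable [Fintype ε] [DecidableEq ε] {w : ε → R}

theorem outLaplacian_apply [Ring R] (u v : V) :
    outLaplacian tail head w u v =
      ∑ e with tail e = u, w e * digraphIncMatrix R tail head v e := by
  rw [outLaplacian, mul_apply, Finset.sum_filter]
  refine Finset.sum_congr rfl fun e _ => ?_
  simp [outIncMatrix, eq_comm]

theorem outLaplacian_apply_self [Ring R] (v : V) :
    outLaplacian tail head w v v = outWeight tail w v := by
  rw [outLaplacian_apply, outWeight]
  refine Finset.sum_congr rfl fun e he => ?_
  rw [← (Finset.mem_filter.1 he).2, digraphIncMatrix_apply_tail, mul_one]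

theorem outLaplacian_blockTriangular [Ring R] [Preorder α] {b : V → α}
    (hlt : ∀ e, b (head e) < b (tail e)) :
    (outLaplacian tail head w).BlockTriangular (OrderDual.toDual ∘ b) := by
  intro u v huv
  rw [outLaplacian_apply]
  refine Finset.sum_eq_zero fun e he => ?_
  obtain rfl : tail e = u := (Finset.mem_filter.1 he).2
  rw [digraphIncMatrix_apply_eq_zero_of_lt (hlt e) huv, mul_zero]

variable {K : Type*} [Field K] [LinearOrder α] [Fintype ι] [DecidableEq ι] {w : ε → K} {b : V → α}
  {t : ι → V}

theorem isUnit_outLaplacian_submatrix (hb : Function.Injective b)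
    (hlt : ∀ e, b (head e) < b (tail e)) (ht : Function.Injective t)
    (hw : ∀ i, outWeight tail w (t i) ≠ 0) :
    IsUnit ((outLaplacian tail head w).submatrix t t) := by
  have htri := (outLaplacian_blockTriangular (w := w) hlt).submatrix (f := t)
  rw [isUnit_iff_isUnit_det, isUnit_iff_ne_zero, det_of_blockTriangular_of_injective htri
    ((OrderDual.toDual.injective.comp hb).comp ht), Finset.prod_ne_zero_iff]
  intro i _
  rw [submatrix_apply, outLaplacian_apply_self]
  exact hw i

theorem transpose_mul_inv_outLaplacian_mul_apply_self (hb : Function.Injective b)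
    (hlt : ∀ e, b (head e) < b (tail e)) (ht : Function.Injective t)
    (hw : ∀ i, outWeight tail w (t i) ≠ 0) {k : ε} {i : ι} (hi : t i = tail k) :
    (((digraphIncMatrix K tail head).submatrix t id)ᵀ *
      ((outLaplacian tail head w).submatrix t t)⁻¹ * (outIncMatrix K tail).submatrix t id) k k =
      (outWeight tail w (tail k))⁻¹ := by
  have hu := isUnit_outLaplacian_submatrix hb hlt ht hw
  have htri := (outLaplacian_blockTriangular (w := w) hlt).submatrix (f := t)
  set L := (outLaplacian tail head w).submatrix t t
  have hbt := (OrderDual.toDual.injective.comp hb).comp ht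
  have hdiag : L i i = outWeight tail w (tail k) := hi ▸ outLaplacian_apply_self (t i)
  have := hu.invertible
  have hinv : L⁻¹.BlockTriangular _ := blockTriangular_inv_of_blockTriangular htri
  have hcol : ∀ j, b (t i) < b (t j) → digraphIncMatrix K tail head (t j) k = 0 := fun j hj =>
    digraphIncMatrix_apply_eq_zero_of_lt (hlt k) (hi ▸ hj)
  calc _ = (((digraphIncMatrix K tail head).submatrix t id)ᵀ * L⁻¹) k i :=
        mul_submatrix_outIncMatrix_apply ht _ k hi
    _ = digraphIncMatrix K tail head (t i) k * L⁻¹ i i :=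
        dotProduct_eq_mul_of_eq_zero_of_lt hbt hcol fun _ hj => hinv hj
    _ = L⁻¹ i i := by rw [hi, digraphIncMatrix_apply_tail, one_mul]
    _ = (L i i)⁻¹ := inv_apply_self_of_blockTriangular htri hbt hu i
    _ = (outWeight tail w (tail k))⁻¹ := by rw [hdiag]

end Laplacian

end Digraph

section RowChange

variable {ι ε R : Type*} [Fintype ι] [DecidableEq ι] [Fintype ε] [CommRing R]

theorem isUnit_mul_transpose_mul {Q : Matrix ι ι R} (hQ : IsUnit Q) {X Y : Matrix ι ε R}
    (hYX : IsUnit (Y * Xᵀ)) : IsUnit (Y * (Q * X)ᵀ) := by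
  rw [transpose_mul, ← Matrix.mul_assoc]
  exact hYX.mul ((isUnit_transpose Q).2 hQ)

theorem transpose_mul_inv_mul_transpose {Q : Matrix ι ι R} (hQ : IsUnit Q) (X Y : Matrix ι ε R) :
    (Q * X)ᵀ * (Y * (Q * X)ᵀ)⁻¹ = Xᵀ * (Y * Xᵀ)⁻¹ := by
  have hdet : IsUnit Qᵀ.det := (isUnit_iff_isUnit_det _).1 ((isUnit_transpose Q).2 hQ)
  rw [transpose_mul, ← Matrix.mul_assoc, Matrix.mul_inv_rev, Matrix.mul_assoc,
    mul_nonsing_inv_cancel_left _ _ hdet]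

end RowChange

theorem isUnit_transpose_mul_self_digraphIncMatrix {V ε ι K : Type*} [Fintype V] [DecidableEq V]
    [Fintype ι] [DecidableEq ι] [Field K] [LinearOrder K] [IsStrictOrderedRing K]
    {tail head : ε → V} {τ : ι → ε}
    (hacyclic : ∀ v, ¬ Relation.TransGen (fun a b => ∃ e, tail e = a ∧ head e = b) v v)
    (hinj : Function.Injective (tail ∘ τ)) :
    IsUnit (((digraphIncMatrix K tail head).submatrix id τ)ᵀ *
      (digraphIncMatrix K tail head).submatrix id τ) := by
  obtain ⟨α, _, b, hb, hlt⟩ := exists_linearOrder_injective_lt_of_acyclic hacyclic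
  have hQ : IsUnit ((digraphIncMatrix K tail head).submatrix (tail ∘ τ) τ) :=
    isUnit_submatrix_digraphIncMatrix hb (fun e => hlt _ _ ⟨e, rfl, rfl⟩) hinj
  exact isUnit_transpose_mul_self_of_isUnit_submatrix hQ

theorem diagonal_entry_eq_inv_outdegree_weight_sum_general
    {V ε ι K : Type*} [Fintype V] [DecidableEq V] [Fintype ε] [DecidableEq ε] [Fintype ι]
    [DecidableEq ι] [Field K] [LinearOrder K] [IsStrictOrderedRing K]
    {tail head : ε → V} {τ : ι → ε} {root : V} {w : ε → K}
    (hacyclic : ∀ v, ¬ Relation.TransGen (fun a b => ∃ e, tail e = a ∧ head e = b) v v)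
    (hinj : Function.Injective (tail ∘ τ)) (hcover : ∀ v ≠ root, ∃ i, tail (τ i) = v)
    (hw : ∀ e, outWeight tail w (tail e) ≠ 0)
    {R R' : Matrix ι ε K} (hR : R = columnCoords (digraphIncMatrix K tail head) τ)
    (hR' : R' = columnCoords (outIncMatrix K tail) τ) :
    IsUnit (R' * diagonal w * Rᵀ) ∧
      ∀ k, (Rᵀ * (R' * diagonal w * Rᵀ)⁻¹ * R') k k = (outWeight tail w (tail k))⁻¹ := by
  obtain ⟨α, _, b, hb, hlt'⟩ := exists_linearOrder_injective_lt_of_acyclic hacyclic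
  have hlt : ∀ e, b (head e) < b (tail e) := fun e => hlt' _ _ ⟨e, rfl, rfl⟩
  have hnotroot := tail_ne_of_forall_exists_tail_eq hlt fun v hv =>
    (hcover v hv).imp' τ fun _ hi => hi
  have hQ := isUnit_submatrix_digraphIncMatrix (R := K) hb hlt hinj
  have hsums : 1 ᵥ* digraphIncMatrix K tail head = 0 :=
    one_vecMul_digraphIncMatrix fun e he => (hlt e).ne (congrArg b he.symm)
  rw [columnCoords_eq_inv_submatrix_mul (t := tail ∘ τ) hsums hcover hQ] at hR
  rw [columnCoords_outIncMatrix hinj] at hR'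
  subst hR hR'
  have hQinv := isUnit_nonsing_inv_iff.2 hQ
  have hL : (outIncMatrix K tail).submatrix (tail ∘ τ) id * diagonal w *
      ((digraphIncMatrix K tail head).submatrix (tail ∘ τ) id)ᵀ =
      (outLaplacian tail head w).submatrix (tail ∘ τ) (tail ∘ τ) := rfl
  refine ⟨isUnit_mul_transpose_mul hQinv ?_, fun k => ?_⟩
  · rw [hL]
    exact isUnit_outLaplacian_submatrix hb hlt hinj fun i => hw (τ i)
  · obtain ⟨i, hi⟩ := hcover (tail k) (hnotroot k)
    rw [transpose_mul_inv_mul_transpose hQinv, hL]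
    exact transpose_mul_inv_outLaplacian_mul_apply_self hb hlt hinj (fun i => hw (τ i)) hi

/-- For an acyclic weighted digraph with positive weights whose first
`n-1` edges form a rooted in-branching with root the vertex `n-1`, the matrix
`R̃ * W * Rᵀ` is invertible and the `(k,k)` entry of `Rᵀ * (R̃ * W * Rᵀ)⁻¹ * R̃` is the
reciprocal of the sum of the weights of all edges sharing the tail of edge `k`. -/
theorem diagonal_entry_eq_inv_outdegree_weight_sum
    (n m : ℕ) (hn : 2 ≤ n) (hm : 1 ≤ m) (hmn : n - 1 ≤ m)
    (tail head : Fin m → Fin n) (hth : ∀ e, tail e ≠ head e)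
    (w : Fin m → ℝ) (hw : ∀ e, 0 < w e)
    (E : Matrix (Fin n) (Fin m) ℝ)
    (hE : ∀ v e, E v e = if v = tail e then 1 else if v = head e then -1 else 0)
    (A : Matrix (Fin n) (Fin m) ℝ)
    (hA : ∀ v e, A v e = if v = tail e then 1 else 0)
    (W : Matrix (Fin m) (Fin m) ℝ) (hW : W = Matrix.diagonal w)
    (hacyclic : ∀ v : Fin n,
      ¬ Relation.TransGen (fun a b => ∃ e, tail e = a ∧ head e = b) v v)
    (root : Fin n) (hroot : root = ⟨n - 1, by omega⟩)
    -- the first n-1 edges form a rooted in-branching with root `root`: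
    (hinj : Function.Injective (fun i : Fin (n - 1) => tail ⟨i.val, lt_of_lt_of_le i.2 hmn⟩))
    (hnotroot : ∀ i : Fin (n - 1), tail ⟨i.val, lt_of_lt_of_le i.2 hmn⟩ ≠ root)
    (hsurj : ∀ v : Fin n, v ≠ root → ∃ i : Fin (n - 1), tail ⟨i.val, lt_of_lt_of_le i.2 hmn⟩ = v)
    (hreach : ∀ v : Fin n, Relation.ReflTransGen
      (fun a b => ∃ e : Fin m, e.val < n - 1 ∧ tail e = a ∧ head e = b) v root)
    (Eτ : Matrix (Fin n) (Fin (n - 1)) ℝ)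
    (hEτ : Eτ = E.submatrix id (fun i : Fin (n - 1) => ⟨i.val, lt_of_lt_of_le i.2 hmn⟩))
    (Ec : Matrix (Fin n) (Fin (m - (n - 1))) ℝ)
    (hEc : Ec = E.submatrix id
      (fun j : Fin (m - (n - 1)) => ⟨n - 1 + j.val, by have := j.2; omega⟩))
    (Aτ : Matrix (Fin n) (Fin (n - 1)) ℝ)
    (hAτ : Aτ = A.submatrix id (fun i : Fin (n - 1) => ⟨i.val, lt_of_lt_of_le i.2 hmn⟩))
    (Ac : Matrix (Fin n) (Fin (m - (n - 1))) ℝ)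
    (hAc : Ac = A.submatrix id
      (fun j : Fin (m - (n - 1)) => ⟨n - 1 + j.val, by have := j.2; omega⟩))
    (Tτ : Matrix (Fin (n - 1)) (Fin (m - (n - 1))) ℝ)
    (hTτ : Tτ = (Eτᵀ * Eτ)⁻¹ * Eτᵀ * Ec)
    (R : Matrix (Fin (n - 1)) (Fin m) ℝ)
    (hR : ∀ (i : Fin (n - 1)) (j : Fin m), R i j =
      if h : j.val < n - 1 then (if i.val = j.val then 1 else 0)
      else Tτ i ⟨j.val - (n - 1), by have := j.2; omega⟩)
    (T'τ : Matrix (Fin (n - 1)) (Fin (m - (n - 1))) ℝ)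
    (hT'τ : T'τ = (Aτᵀ * Aτ)⁻¹ * Aτᵀ * Ac)
    (R' : Matrix (Fin (n - 1)) (Fin m) ℝ)
    (hR' : ∀ (i : Fin (n - 1)) (j : Fin m), R' i j =
      if h : j.val < n - 1 then (if i.val = j.val then 1 else 0)
      else T'τ i ⟨j.val - (n - 1), by have := j.2; omega⟩) :
    IsUnit (R' * W * Rᵀ) ∧
    ∀ k : Fin m, (Rᵀ * (R' * W * Rᵀ)⁻¹ * R') k k =
      (∑ e ∈ Finset.univ.filter (fun e => tail e = tail k), w e)⁻¹ := by
  obtain rfl : E = digraphIncMatrix ℝ tail head := Matrix.ext hE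
  obtain rfl : A = outIncMatrix ℝ tail := Matrix.ext hA
  have hgramE : IsUnit (Eτᵀ * Eτ) :=
    hEτ ▸ isUnit_transpose_mul_self_digraphIncMatrix hacyclic hinj
  have hgramA : IsUnit (Aτᵀ * Aτ) :=
    hAτ ▸ (transpose_mul_self_outIncMatrix (R := ℝ) hinj).symm ▸ isUnit_one
  have hweight : ∀ e, outWeight tail w (tail e) ≠ 0 := fun e =>
    (Finset.sum_pos (fun e _ => hw e) ⟨e, by simp⟩).ne'
  rw [hW]
  exact diagonal_entry_eq_inv_outdegree_weight_sum_general hacyclic hinj hsurj hweight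
    (eq_columnCoords_of_leading_columns hmn hEτ hEc hgramE hTτ hR)
    (eq_columnCoords_of_leading_columns hmn hAτ hAc hgramA hT'τ hR')
end
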